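/- Let (K_{i(e)}, w_e, p_e)_{e∈E} be an irreducible and aperiodic contractive Markov system with average contracting rate 0 < a < 1 such that (K,d) is a complete metric space in which sets of finite diameter are relatively compact, K_1,…,K_N partition K into non-empty open subsets, each p_e restricted to K_{i(e)} is Dini-continuous, and there exists δ > 0 with p_e ≥ δ on K_{i(e)} for all e ∈ E. Let μ be its unique invariant Borel probability measure. Then Uⁿf(x) → ∫ f dμ for all x ∈ K and all bounded continuous f : K → ℝ, and the convergence is uniform on bounded subsets of K; in particular μ is an attractive probability measure of the system. -/

import Mathlib

open MeasureTheory Filter ENNReal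

/-- The modulus of uniform continuity of a real-valued function on a
(pseudo)metric space, valued in `ℝ≥0∞`. -/
noncomputable def modulus {X : Type*} [PseudoMetricSpace X] (h : X → ℝ) (t : ℝ) : ℝ≥0∞ :=
  ⨆ (x : X) (y : X) (_ : dist x y ≤ t), ENNReal.ofReal |h x - h y|

/-- A function is Dini-continuous if `∫_0^c φ(t)/t dt < ∞` for some `c > 0`,
where `φ` is its modulus of uniform continuity. -/
def DiniContinuous {X : Type*} [PseudoMetricSpace X] (h : X → ℝ) : Prop :=
  ∃ c > (0 : ℝ), ∫⁻ t in Set.Ioc (0 : ℝ) c, modulus h t / ENNReal.ofReal t < ⊤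

/-- A Markov system on a metric space `K`, with vertex set `Fin N` and edge set `E`. -/
structure MarkovSystem (K : Type*) [MetricSpace K] [MeasurableSpace K]
    (N : ℕ) (E : Type*) [Fintype E] where
  /-- initial vertex of an edge -/
  edgeI : E → Fin N
  /-- terminal vertex of an edge -/
  edgeT : E → Fin N
  /-- the partition `K_1, …, K_N` of `K` -/
  Ki : Fin N → Set K
  Ki_nonempty : ∀ v, (Ki v).Nonempty
  Ki_measurable : ∀ v, MeasurableSet (Ki v)
  Ki_disjoint : ∀ v v', v ≠ v' → Disjoint (Ki v) (Ki v')
  Ki_cover : ∀ x : K, ∃ v, x ∈ Ki v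
  /-- the maps `w_e` -/
  w : E → K → K
  w_measurable : ∀ e, Measurable (w e)
  w_mapsTo : ∀ e, Set.MapsTo (w e) (Ki (edgeI e)) (Ki (edgeT e))
  /-- the probability functions `p_e` -/
  p : E → K → ℝ
  p_measurable : ∀ e, Measurable (p e)
  p_nonneg : ∀ e x, 0 ≤ p e x
  p_sum_one : ∀ x : K, ∑ e, p e x = 1
  p_eq_zero : ∀ e, ∀ x : K, x ∉ Ki (edgeI e) → p e x = 0

namespace MarkovSystem

variable {K : Type*} [MetricSpace K] [MeasurableSpace K] {N : ℕ} {E : Type*} [Fintype E]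

/-- Condition of contractiveness on average with rate `a`. -/
def ContractiveOnAvg (sys : MarkovSystem K N E) (a : ℝ) : Prop :=
  ∀ v : Fin N, ∀ x ∈ sys.Ki v, ∀ y ∈ sys.Ki v,
    ∑ e, sys.p e x * dist (sys.w e x) (sys.w e y) ≤ a * dist x y

/-- `μ` is an invariant Borel probability measure of the Markov system:
`∫ Uf dμ = ∫ f dμ` for every bounded Borel measurable `f`. -/
def IsInvariant (sys : MarkovSystem K N E) (μ : Measure K) : Prop :=
  IsProbabilityMeasure μ ∧
  ∀ f : K → ℝ, Measurable f → (∃ B, ∀ x, |f x| ≤ B) →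
    ∫ x, (∑ e, sys.p e x * f (sys.w e x)) ∂μ = ∫ x, f x ∂μ

end MarkovSystem

/-- `wordProb w p (e₁ :: … :: eₖ) x = p_{e₁}(x) p_{e₂}(w_{e₁}x) ⋯ p_{eₖ}(w_{e_{k-1}} ∘ ⋯ ∘ w_{e₁}x)`. -/
def wordProb {K E : Type*} (w : E → K → K) (p : E → K → ℝ) : List E → K → ℝ
  | [], _ => 1
  | e :: l, x => p e x * wordProb w p l (w e x)

/-- `wordMap w (e₁ :: … :: eₖ) = w_{eₖ} ∘ ⋯ ∘ w_{e₁}`. -/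
def wordMap {K E : Type*} (w : E → K → K) : List E → K → K
  | [], x => x
  | e :: l, x => wordMap w l (w e x)

/-- `M` is the generalized Markov measure on `Σ = E^ℤ` associated with the Markov
system and the invariant measure `μ`. -/
def IsMarkovMeasure {K : Type*} [MetricSpace K] [MeasurableSpace K] {N : ℕ}
    {E : Type*} [Fintype E] [MeasurableSpace E]
    (sys : MarkovSystem K N E) (μ : Measure K) (M : Measure (ℤ → E)) : Prop :=
  IsProbabilityMeasure M ∧
  ∀ (m : ℤ) (es : List E),
    M {σ : ℤ → E | ∀ j : Fin es.length, σ (m + (j : ℕ)) = es.get j}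
      = ENNReal.ofReal (∫ x, wordProb sys.w sys.p es x ∂μ)

/-- The left shift on `E^ℤ`. -/
def shift {E : Type*} (σ : ℤ → E) : ℤ → E := fun k => σ (k + 1)

/-- `comps w σ m = w_{σ₀} ∘ w_{σ₋₁} ∘ ⋯ ∘ w_{σ₋ₘ}`. -/
def comps {K E : Type*} (w : E → K → K) (σ : ℤ → E) : ℕ → K → K
  | 0 => w (σ 0)
  | n + 1 => fun x => comps w σ n (w (σ (-((n : ℤ) + 1))) x)

/-- `F` is the coding map of the contractive Markov system:
`F(σ) = lim_{m → -∞} w_{σ₀} ∘ ⋯ ∘ w_{σₘ} x_{i(σₘ)}` for `M`-a.e. `σ`. -/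
def IsCodingMap {K : Type*} [MetricSpace K] [MeasurableSpace K] {N : ℕ}
    {E : Type*} [Fintype E] [MeasurableSpace E]
    (sys : MarkovSystem K N E) (M : Measure (ℤ → E)) (F : (ℤ → E) → K) : Prop :=
  Measurable F ∧ ∃ xs : Fin N → K, (∀ v, xs v ∈ sys.Ki v) ∧
    ∀ᵐ σ ∂M, Filter.Tendsto
      (fun m : ℕ => comps sys.w σ m (xs (sys.edgeI (σ (-(m : ℤ))))))
      Filter.atTop (nhds (F σ))

/-- Entropy of the finite measurable partition given by the fibers of `π`. -/
noncomputable def partEntropy {Ω : Type*} [MeasurableSpace Ω] (M : Measure Ω)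
    {F : Type*} [Fintype F] (π : Ω → F) : ℝ :=
  -∑ f : F, ((M (π ⁻¹' {f})).toReal * Real.log (M (π ⁻¹' {f})).toReal)

/-- The Kolmogorov–Sinai entropy of a measure-preserving transformation `S`
with respect to `M`: the supremum over all finite measurable partitions `π` of
`inf_n (1/n) H(⋁_{i=0}^{n-1} S^{-i} π)`. -/
noncomputable def ksEntropy {Ω : Type*} [MeasurableSpace Ω] (M : Measure Ω) (S : Ω → Ω) : ℝ≥0∞ :=
  ⨆ (k : ℕ) (π : Ω → Fin k) (_ : ∀ j, MeasurableSet (π ⁻¹' {j})),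
    ⨅ n : ℕ, ENNReal.ofReal (((n : ℝ) + 1)⁻¹ *
      partEntropy M (fun ω => fun j : Fin (n + 1) => π (S^[(j : ℕ)] ω)))

/-- `IsPath sys l` : the list of edges `l` is a directed path of the multigraph,
i.e. consecutive edges are composable. -/
def MarkovSystem.IsPath {K : Type*} [MetricSpace K] [MeasurableSpace K]
    {N : ℕ} {E : Type*} [Fintype E] (sys : MarkovSystem K N E) : List E → Prop
  | [] => True
  | [_] => True
  | e :: e' :: l => sys.edgeT e = sys.edgeI e' ∧ MarkovSystem.IsPath sys (e' :: l)

/-- The underlying directed multigraph is irreducible: any two vertices are joined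
by a directed path. -/
def MarkovSystem.Irreducible {K : Type*} [MetricSpace K] [MeasurableSpace K]
    {N : ℕ} {E : Type*} [Fintype E] (sys : MarkovSystem K N E) : Prop :=
  ∀ u v : Fin N, ∃ (l : List E) (h : l ≠ []),
    sys.IsPath l ∧ sys.edgeI (l.head h) = u ∧ sys.edgeT (l.getLast h) = v

/-- The set of lengths of directed cycles of the multigraph. -/
def MarkovSystem.cycleLengths {K : Type*} [MetricSpace K] [MeasurableSpace K]
    {N : ℕ} {E : Type*} [Fintype E] (sys : MarkovSystem K N E) : Set ℕ :=
  {n | ∃ (l : List E) (h : l ≠ []), sys.IsPath l ∧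
    sys.edgeT (l.getLast h) = sys.edgeI (l.head h) ∧ l.length = n}

/-- The multigraph is aperiodic: the greatest common divisor of the lengths of its
directed cycles is `1`. -/
def MarkovSystem.Aperiodic {K : Type*} [MetricSpace K] [MeasurableSpace K]
    {N : ℕ} {E : Type*} [Fintype E] (sys : MarkovSystem K N E) : Prop :=
  ∀ d : ℕ, (∀ n ∈ sys.cycleLengths, d ∣ n) → d = 1

/-- The Markov operator `U` acting on functions: `Uf = ∑_e p_e · (f ∘ w_e)`. -/
noncomputable def Uop {K : Type*} [MetricSpace K] [MeasurableSpace K]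
    {N : ℕ} {E : Type*} [Fintype E]
    (sys : MarkovSystem K N E) (f : K → ℝ) : K → ℝ :=
  fun x => ∑ e, sys.p e x * f (sys.w e x)

/-- The adjoint Markov operator `U*` on measures: `U*ν(f) = ∫ Uf dν`. -/
noncomputable def Ustar {K : Type*} [MetricSpace K] [MeasurableSpace K]
    {N : ℕ} {E : Type*} [Fintype E]
    (sys : MarkovSystem K N E) (ν : Measure K) : Measure K :=
  ∑ e : E, Measure.map (sys.w e) (ν.withDensity fun x => ENNReal.ofReal (sys.p e x))

/-!
Let two copies of the process move independently. Irreducibility, aperiodicity and `p_e ≥ δ` bring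
them, with positive probability, into a common cell, where average contraction moves them close
together along shared edges. The distance to a reference point is a Lyapunov function, so by Harris'
argument the transition operator of the pair that is stopped on a neighbourhood of the diagonal
tends to `0`. On the other hand Dini-continuity makes the oscillation of `Uⁿf`, for bounded
Lipschitz `f`, small near the diagonal, uniformly in `n`. As `|Uⁿf(x) - Uⁿf(y)|` evolves
subharmonically under the pair operator, both facts together give `Uⁿf(x) - Uⁿf(y) → 0`, and
integrating over `y` against `μ` gives the limit. The Portmanteau theorem extends it from bounded
Lipschitz to bounded continuous functions.
-/

/-- A *Markov operator*: a positive linear operator on the real functions on `X` which fixes `1`.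
Positivity is encoded as monotonicity for the pointwise order. -/
structure IsMarkovOperator {X : Type*} (P : Module.End ℝ (X → ℝ)) : Prop where
  monotone : Monotone P
  map_one : P 1 = 1

namespace IsMarkovOperator

variable {X : Type*} {P : Module.End ℝ (X → ℝ)} {V : X → ℝ} {a b c : ℝ} {A : Set X}

lemma pow (hP : IsMarkovOperator P) (n : ℕ) : IsMarkovOperator (P ^ n) := by
  induction n with
  | zero => exact ⟨monotone_id, rfl⟩
  | succ n ih =>
    rw [pow_succ]
    exact ⟨ih.monotone.comp hP.monotone, by rw [Module.End.mul_apply, hP.map_one, ih.map_one]⟩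

lemma apply_nonneg (hP : IsMarkovOperator P) {g : X → ℝ} (hg : 0 ≤ g) : 0 ≤ P g := by
  simpa using hP.monotone hg

lemma abs_apply_le (hP : IsMarkovOperator P) (g : X → ℝ) (z : X) : |P g z| ≤ P |g| z :=
  abs_le'.2 ⟨hP.monotone (le_abs_self g) z, by simpa using hP.monotone (neg_le_abs g) z⟩

lemma pow_apply_le_of_drift (hP : IsMarkovOperator P) (ha0 : 0 ≤ a) (ha1 : a < 1)
    (hdrift : P V ≤ a • V + b • 1) (hb : 0 ≤ b) (n : ℕ) :
    (P ^ n) V ≤ a ^ n • V + (b / (1 - a)) • 1 := by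
  have ha : 0 < 1 - a := sub_pos.2 ha1
  induction n with
  | zero =>
    have : 0 ≤ b / (1 - a) := by positivity
    intro z
    simpa using this
  | succ n ih =>
    calc (P ^ (n + 1)) V ≤ (P ^ n) (a • V + b • 1) := (hP.pow n).monotone hdrift
      _ = a • (P ^ n) V + b • 1 := by rw [map_add, map_smul, map_smul, (hP.pow n).map_one]
      _ ≤ a • (a ^ n • V + (b / (1 - a)) • 1) + b • 1 := by gcongr
      _ = a ^ (n + 1) • V + (b / (1 - a)) • 1 := by
        ext z
        simp only [Pi.add_apply, Pi.smul_apply, Pi.one_apply, smul_eq_mul]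
        field_simp
        ring

-- Near the origin the return mass `m ≥ c` outweighs the additive drift `c / 2`; far away the
-- multiplicative drift alone decreases `1 + s`.
lemma exists_add_sub_le_mul (ha1 : a < 1) (hc : 0 < c) :
    ∃ ρ : ℝ, ρ < 1 ∧ ∀ s m : ℝ, 0 ≤ s → 0 ≤ m → ((1 - a) * s ≤ c → c ≤ m) →
      1 + (a * s + c / 2) - m ≤ ρ * (1 + s) := by
  have ha : 0 < 1 - a := sub_pos.2 ha1
  set τ := (1 - a) * c / (2 * (1 - a + c)) with hτ
  refine ⟨1 - τ, sub_lt_self _ (by positivity), fun s m hs hm hreturn => ?_⟩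
  rcases le_or_gt ((1 - a) * s) c with hnear | hfar
  · have hτc : τ ≤ c / 2 := by
      rw [hτ, div_le_div_iff₀ (by positivity) two_pos]
      nlinarith
    have hτa : τ ≤ 1 - a := by
      rw [hτ, div_le_iff₀ (by positivity)]
      nlinarith
    nlinarith [hreturn hnear, mul_le_mul_of_nonneg_right hτa hs]
  · have hτs : τ * (1 + s) ≤ (1 - a) * s / 2 := by
      rw [hτ, div_mul_eq_mul_div, div_le_div_iff₀ (by positivity) two_pos]
      nlinarith [mul_le_mul_of_nonneg_left hfar.le ha.le]
    linarith

lemma exists_weighted_contraction (hP : IsMarkovOperator P) (hV : 0 ≤ V) (ha1 : a < 1)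
    (hdrift : P V ≤ a • V + b • 1) (hb : 0 < b) (hc : 0 < c)
    (hminor : ∀ z, V z ≤ 2 * b / (1 - a) → c ≤ P (A.indicator 1) z) :
    ∃ β : ℝ, 0 ≤ β ∧ ∃ ρ : ℝ, ρ < 1 ∧ ∀ κ : ℝ, 0 ≤ κ → ∀ g : X → ℝ, (∀ z ∈ A, g z ≤ 0) →
      g ≤ κ • (1 + β • V) → P g ≤ (ρ * κ) • (1 + β • V) := by
  have ha : 0 < 1 - a := sub_pos.2 ha1
  obtain ⟨ρ, hρ, hweight⟩ := exists_add_sub_le_mul ha1 hc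
  set β := c / (2 * b) with hβ
  have hβb : β * b = c / 2 := by rw [hβ]; field_simp
  have hβ0 : 0 ≤ β := by positivity
  refine ⟨β, hβ0, ρ, hρ, fun κ hκ g hgA hg z => ?_⟩
  have hg_le : g ≤ κ • (1 + β • V - A.indicator 1) := fun y => by
    by_cases hy : y ∈ A
    · have hVy : 0 ≤ V y := hV y
      have : 0 ≤ κ * (β * V y) := by positivity
      simpa [hy] using (hgA y hy).trans this
    · simpa [hy] using hg y
  have hPg : P g z ≤ κ * (1 + β * P V z - P (A.indicator 1) z) := by
    simpa only [map_smul, map_sub, map_add, hP.map_one, Pi.smul_apply, Pi.sub_apply, Pi.add_apply,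
      Pi.one_apply, smul_eq_mul] using hP.monotone hg_le z
  have hPV : β * P V z ≤ a * (β * V z) + c / 2 := by
    have : P V z ≤ a * V z + b := by simpa using hdrift z
    calc β * P V z ≤ β * (a * V z + b) := by gcongr
      _ = a * (β * V z) + c / 2 := by rw [← hβb]; ring
  have hreturn : (1 - a) * (β * V z) ≤ c → c ≤ P (A.indicator 1) z := fun h => by
    refine hminor z ((le_div_iff₀ ha).2 ?_)
    rw [hβ, show (1 - a) * (c / (2 * b) * V z) = c * (V z * (1 - a) / (2 * b)) by ring] at h
    simpa using (div_le_iff₀ (by positivity)).1 ((mul_le_iff_le_one_right hc).1 h)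
  have hreturn0 : 0 ≤ P (A.indicator 1) z :=
    hP.apply_nonneg (Set.indicator_nonneg fun _ _ => zero_le_one) z
  calc P g z ≤ κ * (1 + (a * (β * V z) + c / 2) - P (A.indicator 1) z) :=
        hPg.trans (by gcongr)
    _ ≤ κ * (ρ * (1 + β * V z)) := by
        gcongr
        exact hweight _ _ (mul_nonneg hβ0 (hV z)) hreturn0 hreturn
    _ = ((ρ * κ) • (1 + β • V)) z := by simp; ring

lemma le_pow_apply_of_subharmonic (hP : IsMarkovOperator P) {g : ℕ → X → ℝ}
    (hg : ∀ n, g (n + 1) ≤ P (g n)) (n T : ℕ) : g (n + T) ≤ (P ^ T) (g n) := by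
  induction T with
  | zero => exact le_rfl
  | succ T ih =>
    rw [pow_succ']
    exact (hg (n + T)).trans (hP.monotone ih)

-- Harris' theorem, with the mass `c` that enters `A` in the role of a minorizing measure.
theorem exists_tendsto_zero_bound (hP : IsMarkovOperator P) (hV : 0 ≤ V) (ha0 : 0 ≤ a)
    (ha1 : a < 1) (hb : 0 < b) (hdrift : P V ≤ a • V + b • 1)
    (hminor : ∀ R : ℝ, ∃ T : ℕ, T ≠ 0 ∧
      ∃ c : ℝ, 0 < c ∧ ∀ z, V z ≤ R → c ≤ (P ^ T) (A.indicator 1) z)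
    {g : ℕ → X → ℝ} (hg : ∀ n, g (n + 1) ≤ P (g n)) (hgA : ∀ n, ∀ z ∈ A, g n z ≤ 0)
    {B : ℝ} (hB0 : 0 ≤ B) (hB : ∀ n z, g n z ≤ B) :
    ∃ u : ℕ → ℝ, Tendsto u atTop (nhds 0) ∧
      ∃ β : ℝ, 0 ≤ β ∧ ∀ n z, g n z ≤ u n * (1 + β * V z) := by
  have hb' : 0 < b / (1 - a) := div_pos hb (sub_pos.2 ha1)
  obtain ⟨T, hT, c, hc, hminorT⟩ := hminor (2 * (b / (1 - a)) / (1 - a))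
  have hdriftT : (P ^ T) V ≤ a • V + (b / (1 - a)) • 1 := by
    refine (hP.pow_apply_le_of_drift ha0 ha1 hdrift hb.le T).trans ?_
    gcongr
    exact pow_le_of_le_one ha0 ha1.le hT
  obtain ⟨β, hβ, ρ, hρ, hcontract⟩ :=
    (hP.pow T).exists_weighted_contraction hV ha1 hdriftT hb' hc hminorT
  have hw : 0 ≤ β • V := smul_nonneg hβ hV
  have hw1 : 0 ≤ 1 + β • V := add_nonneg zero_le_one hw
  have hiter : ∀ m k, g (m + T * k) ≤ (max ρ 0 ^ k * B) • (1 + β • V) := fun m k => by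
    induction k with
    | zero =>
      intro z
      have : 0 ≤ B * (β * V z) := mul_nonneg hB0 (hw z)
      simpa [mul_add] using (hB m z).trans (le_add_of_nonneg_right this)
    | succ k ih =>
      rw [mul_add_one, ← add_assoc]
      calc g (m + T * k + T) ≤ (P ^ T) (g (m + T * k)) :=
            hP.le_pow_apply_of_subharmonic hg (m + T * k) T
        _ ≤ (ρ * (max ρ 0 ^ k * B)) • (1 + β • V) := hcontract _ (by positivity) _ (hgA _) ih
        _ ≤ (max ρ 0 * (max ρ 0 ^ k * B)) • (1 + β • V) := by
            gcongr
            exact le_max_left ρ 0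
        _ = (max ρ 0 ^ (k + 1) * B) • (1 + β • V) := by rw [pow_succ', mul_assoc]
  refine ⟨fun n => max ρ 0 ^ (n / T) * B, ?_, β, hβ, fun n z => ?_⟩
  · have := (_root_.tendsto_pow_atTop_nhds_zero_of_lt_one (le_max_right ρ 0)
      (max_lt hρ one_pos)).comp (Nat.tendsto_div_const_atTop hT)
    simpa using this.mul_const B
  · simpa [Nat.mod_add_div] using hiter (n % T) (n / T) z

end IsMarkovOperator

section Modulus

variable {X : Type*} [PseudoMetricSpace X] {h : X → ℝ}

lemma modulus_mono : Monotone (modulus h) := fun _ _ hst =>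
  iSup_mono fun _ => iSup_mono fun _ => iSup_mono' fun hd => ⟨hd.trans hst, le_rfl⟩

lemma ofReal_abs_sub_le_modulus {x y : X} {t : ℝ} (hxy : dist x y ≤ t) :
    ENNReal.ofReal |h x - h y| ≤ modulus h t :=
  le_iSup_of_le x (le_iSup_of_le y (le_iSup_of_le hxy le_rfl))

lemma abs_sub_le_toReal_modulus {x y : X} {t : ℝ} (ht : modulus h t ≠ ⊤) (hxy : dist x y ≤ t) :
    |h x - h y| ≤ (modulus h t).toReal :=
  (ENNReal.ofReal_le_iff_le_toReal ht).1 (ofReal_abs_sub_le_modulus hxy)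

lemma modulus_mul_le_setLIntegral (h : X → ℝ) {r t : ℝ} (ht : 0 < t) :
    modulus h (r * t) * ENNReal.ofReal (1 - r) ≤
      ∫⁻ u in Set.Ioc (r * t) t, modulus h u / ENNReal.ofReal u := by
  calc modulus h (r * t) * ENNReal.ofReal (1 - r)
      = ∫⁻ _ in Set.Ioc (r * t) t, modulus h (r * t) / ENNReal.ofReal t := by
        rw [setLIntegral_const, Real.volume_Ioc, show t - r * t = t * (1 - r) by ring,
          ENNReal.ofReal_mul ht.le, ← mul_assoc,
          ENNReal.div_mul_cancel (by simpa using ht) ENNReal.ofReal_ne_top]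
    _ ≤ _ := setLIntegral_mono' measurableSet_Ioc fun u hu =>
        ENNReal.div_le_div (modulus_mono hu.1.le) (ENNReal.ofReal_le_ofReal hu.2)

lemma tsum_modulus_mul_le_setLIntegral (h : X → ℝ) {r s : ℝ} (hr0 : 0 < r) (hr1 : r ≤ 1)
    (hs : 0 < s) :
    (∑' k : ℕ, modulus h (s * r ^ (k + 1))) * ENNReal.ofReal (1 - r) ≤
      ∫⁻ t in Set.Ioc 0 s, modulus h t / ENNReal.ofReal t := by
  have hanti : Antitone fun k : ℕ => s * r ^ k := fun m n hmn =>
    mul_le_mul_of_nonneg_left (pow_le_pow_of_le_one hr0.le hr1 hmn) hs.le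
  calc (∑' k : ℕ, modulus h (s * r ^ (k + 1))) * ENNReal.ofReal (1 - r)
      = ∑' k : ℕ, modulus h (s * r ^ (k + 1)) * ENNReal.ofReal (1 - r) :=
        ENNReal.tsum_mul_right.symm
    _ ≤ ∑' k : ℕ, ∫⁻ t in Set.Ioc (s * r ^ (k + 1)) (s * r ^ k),
          modulus h t / ENNReal.ofReal t := ENNReal.tsum_le_tsum fun k => by
        rw [show s * r ^ (k + 1) = r * (s * r ^ k) by ring]
        exact modulus_mul_le_setLIntegral h (by positivity)
    _ = ∫⁻ t in ⋃ k : ℕ, Set.Ioc (s * r ^ (k + 1)) (s * r ^ k),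
          modulus h t / ENNReal.ofReal t :=
        (lintegral_iUnion (fun _ => measurableSet_Ioc)
          hanti.pairwise_disjoint_on_Ioc_succ _).symm
    _ ≤ ∫⁻ t in Set.Ioc 0 s, modulus h t / ENNReal.ofReal t :=
        lintegral_mono_set (Set.iUnion_subset fun k => Set.Ioc_subset_Ioc (by positivity)
          (by simpa using hanti (Nat.zero_le k)))

lemma DiniContinuous.tendsto_setLIntegral_zero (hd : DiniContinuous h) :
    Tendsto (fun s => ∫⁻ t in Set.Ioc 0 s, modulus h t / ENNReal.ofReal t)
      (nhdsWithin 0 (Set.Ioi 0)) (nhds 0) := by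
  obtain ⟨c, hc, hint⟩ := hd
  have hvol : Tendsto (fun s => volume.restrict (Set.Ioc 0 c) (Set.Ioc 0 s))
      (nhdsWithin 0 (Set.Ioi 0)) (nhds 0) := by
    refine tendsto_of_tendsto_of_tendsto_of_le_of_le tendsto_const_nhds
      (h := fun s => ENNReal.ofReal s) ?_ (fun _ => zero_le) fun s => ?_
    · simpa using (ENNReal.tendsto_ofReal (tendsto_id (x := nhds (0 : ℝ)))).mono_left
        nhdsWithin_le_nhds
    · simpa using Measure.restrict_apply_le (μ := volume) (Set.Ioc 0 c) (Set.Ioc 0 s)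
  refine (MeasureTheory.tendsto_setLIntegral_zero hint.ne hvol).congr' ?_
  filter_upwards [Ioc_mem_nhdsGT hc] with s hs
  rw [Measure.restrict_restrict_of_subset (Set.Ioc_subset_Ioc_right hs.2)]

lemma DiniContinuous.tendsto_tsum_modulus (hd : DiniContinuous h) {r : ℝ} (hr0 : 0 < r)
    (hr1 : r < 1) :
    Tendsto (fun s => ∑' k : ℕ, modulus h (s * r ^ k)) (nhdsWithin 0 (Set.Ioi 0)) (nhds 0) := by
  have hr : ENNReal.ofReal (1 - r) ≠ 0 := by simpa using hr1
  have hscale : Tendsto (fun s => s / r) (nhdsWithin 0 (Set.Ioi 0))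
      (nhdsWithin 0 (Set.Ioi 0)) := by
    refine tendsto_nhdsWithin_iff.2 ⟨?_, ?_⟩
    · simpa using ((continuous_id.div_const r).tendsto 0).mono_left nhdsWithin_le_nhds
    · filter_upwards [self_mem_nhdsWithin] with s hs using div_pos hs hr0
  have hlim := ENNReal.Tendsto.div_const (hd.tendsto_setLIntegral_zero.comp hscale) (.inr hr)
  rw [ENNReal.zero_div] at hlim
  refine tendsto_of_tendsto_of_tendsto_of_le_of_le' tendsto_const_nhds hlim
    (.of_forall fun _ => zero_le) ?_
  filter_upwards [self_mem_nhdsWithin] with s hs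
  rw [ENNReal.le_div_iff_mul_le (.inl hr) (.inl ENNReal.ofReal_ne_top)]
  have hs_eq : ∀ k : ℕ, s / r * r ^ (k + 1) = s * r ^ k := fun k => by
    rw [pow_succ]; field_simp
  simpa only [hs_eq, Function.comp_apply] using
    tsum_modulus_mul_le_setLIntegral h hr0 hr1.le (div_pos hs hr0)

end Modulus

namespace MarkovSystem

variable {K : Type*} [MetricSpace K] [MeasurableSpace K] {N : ℕ} {E : Type*} [Fintype E]

section Graph

/-- `sys.Walk n u v` : there is a directed walk with `n` edges from `u` to `v`, defined by recursion
on the first edge. In contrast to `IsPath` it allows the empty walk. -/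
def Walk (sys : MarkovSystem K N E) : ℕ → Fin N → Fin N → Prop
  | 0, u, v => u = v
  | n + 1, u, v => ∃ e, sys.edgeI e = u ∧ sys.Walk n (sys.edgeT e) v

variable {sys : MarkovSystem K N E}

lemma Walk.trans {m n : ℕ} {u v z : Fin N} (h : sys.Walk m u v) (h' : sys.Walk n v z) :
    sys.Walk (m + n) u z := by
  induction m generalizing u with
  | zero => obtain rfl : u = v := h; simpa using h'
  | succ m ih =>
    obtain ⟨e, rfl, he⟩ := h
    rw [Nat.succ_add]
    exact ⟨e, rfl, ih he⟩

lemma IsPath.walk {l : List E} (h : l ≠ []) (hl : sys.IsPath l) :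
    sys.Walk l.length (sys.edgeI (l.head h)) (sys.edgeT (l.getLast h)) := by
  induction l with
  | nil => exact absurd rfl h
  | cons e l ih =>
    cases l with
    | nil => exact ⟨e, rfl, rfl⟩
    | cons e' l =>
      refine ⟨e, rfl, ?_⟩
      rw [hl.1, List.getLast_cons (List.cons_ne_nil e' l)]
      exact ih (List.cons_ne_nil e' l) hl.2

/-- The lengths of the closed walks at `v`, bundled as a submonoid of `ℕ`. -/
def closedWalkLengths (sys : MarkovSystem K N E) (v : Fin N) : AddSubmonoid ℕ where
  carrier := {n | sys.Walk n v v}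
  zero_mem' := rfl
  add_mem' h h' := Walk.trans h h'

lemma Irreducible.exists_walk (hirred : sys.Irreducible) (u v : Fin N) :
    ∃ n, sys.Walk n u v := by
  obtain ⟨l, h, hl, rfl, rfl⟩ := hirred u v
  exact ⟨_, hl.walk h⟩

lemma Irreducible.setGcd_closedWalkLengths (hirred : sys.Irreducible) (haper : sys.Aperiodic)
    (v : Fin N) : Nat.setGcd (sys.closedWalkLengths v : Set ℕ) = 1 := by
  refine haper _ fun n hn => ?_
  obtain ⟨l, h, hl, hcyc, rfl⟩ := hn
  have hcycle := hl.walk h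
  rw [hcyc] at hcycle
  obtain ⟨s, hs⟩ := hirred.exists_walk v (sys.edgeI (l.head h))
  obtain ⟨t, ht⟩ := hirred.exists_walk (sys.edgeI (l.head h)) v
  have hshort : Nat.setGcd (sys.closedWalkLengths v : Set ℕ) ∣ s + t :=
    Nat.setGcd_dvd_of_mem (hs.trans ht)
  have hlong : Nat.setGcd (sys.closedWalkLengths v : Set ℕ) ∣ s + l.length + t :=
    Nat.setGcd_dvd_of_mem ((hs.trans hcycle).trans ht)
  rw [add_right_comm] at hlong
  exact (Nat.dvd_add_right hshort).1 hlong

lemma Irreducible.eventually_walk (hirred : sys.Irreducible) (haper : sys.Aperiodic)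
    (v : Fin N) : ∀ᶠ n in atTop, sys.Walk n v v := by
  obtain ⟨n₀, hn₀⟩ := Nat.exists_mem_closure_of_ge (sys.closedWalkLengths v : Set ℕ)
  filter_upwards [eventually_ge_atTop n₀] with n hn
  have hmem := hn₀ n hn (by simp [hirred.setGcd_closedWalkLengths haper v])
  rwa [AddSubmonoid.closure_eq] at hmem

lemma Irreducible.exists_common_walk (hirred : sys.Irreducible) (haper : sys.Aperiodic)
    (u v : Fin N) : ∃ n z, sys.Walk n u z ∧ sys.Walk n v z := by
  obtain ⟨s, hs⟩ := hirred.exists_walk u v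
  obtain ⟨n, hn, hsn⟩ := ((hirred.eventually_walk haper v).and
    ((tendsto_add_atTop_nat s).eventually (hirred.eventually_walk haper v))).exists
  exact ⟨s + n, v, hs.trans hn, add_comm n s ▸ hsn⟩

end Graph

section Cells

variable (sys : MarkovSystem K N E)

/-- The vertex whose cell contains `x`. Membership in a common cell is expressed throughout as an
equality of vertices. -/
noncomputable def vert (x : K) : Fin N := (sys.Ki_cover x).choose

lemma mem_Ki_vert (x : K) : x ∈ sys.Ki (sys.vert x) := (sys.Ki_cover x).choose_spec

/-- A chosen point in each cell. -/
noncomputable def base (v : Fin N) : K := (sys.Ki_nonempty v).choose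

lemma base_mem (v : Fin N) : sys.base v ∈ sys.Ki v := (sys.Ki_nonempty v).choose_spec

/-- The distance of a point to the chosen point of its cell, the Lyapunov function of the system.
Averages of distances are controlled within a cell only, so there is one reference point per
cell. -/
noncomputable def height (x : K) : ℝ := dist x (sys.base (sys.vert x))

variable {sys} {x y : K} {e : E}

lemma vert_eq {v : Fin N} (h : x ∈ sys.Ki v) : sys.vert x = v := by
  by_contra hne
  exact Set.disjoint_left.1 (sys.Ki_disjoint _ _ hne) (sys.mem_Ki_vert x) h

lemma vert_base (v : Fin N) : sys.vert (sys.base v) = v := vert_eq (sys.base_mem v)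

lemma vert_w (h : sys.vert x = sys.edgeI e) : sys.vert (sys.w e x) = sys.edgeT e :=
  vert_eq (sys.w_mapsTo e (h ▸ sys.mem_Ki_vert x))

lemma p_eq_zero_of_vert_ne (h : sys.vert x ≠ sys.edgeI e) : sys.p e x = 0 :=
  sys.p_eq_zero e x fun hx => h (vert_eq hx)

lemma height_nonneg (x : K) : 0 ≤ sys.height x := dist_nonneg

lemma dist_le_height_add_height (h : sys.vert x = sys.vert y) :
    dist x y ≤ sys.height x + sys.height y := by
  rw [height, height, ← h]
  exact dist_triangle_right x y (sys.base (sys.vert x))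

variable (sys) in
lemma exists_height_le_of_isBounded {s : Set K} (hs : Bornology.IsBounded s) :
    ∃ R, ∀ x ∈ s, sys.height x ≤ R := by
  obtain ⟨R, hR⟩ := Metric.isBounded_iff.1 (hs.union (Set.finite_range sys.base).isBounded)
  exact ⟨R, fun x hx => hR (.inl hx) (.inr ⟨sys.vert x, rfl⟩)⟩

variable (sys) in
lemma exists_height_w_le : ∃ b : ℝ, 0 < b ∧ ∀ e x, sys.vert x = sys.edgeI e →
    sys.height (sys.w e x) ≤ dist (sys.w e x) (sys.w e (sys.base (sys.vert x))) + b := by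
  obtain ⟨b, hb⟩ := Set.Finite.bddAbove (Set.finite_range fun e : E =>
    dist (sys.w e (sys.base (sys.edgeI e))) (sys.base (sys.edgeT e)))
  refine ⟨max b 1, by positivity, fun e x he => ?_⟩
  rw [height, vert_w he, he]
  exact (dist_triangle _ _ _).trans (by gcongr; exact (hb ⟨e, rfl⟩).trans (le_max_left b 1))

end Cells

section Averages

variable {sys : MarkovSystem K N E} {x y : K} {e : E} {a b δ : ℝ}

lemma sum_p_mul_const (x : K) (c : ℝ) : ∑ e, sys.p e x * c = c := by
  rw [← Finset.sum_mul, sys.p_sum_one, one_mul]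

lemma sum_p_mul_le_sum_p_mul {g h : E → ℝ} (hgh : ∀ e, sys.vert x = sys.edgeI e → g e ≤ h e) :
    ∑ e, sys.p e x * g e ≤ ∑ e, sys.p e x * h e := by
  refine Finset.sum_le_sum fun e _ => ?_
  by_cases he : sys.vert x = sys.edgeI e
  · exact mul_le_mul_of_nonneg_left (hgh e he) (sys.p_nonneg e x)
  · simp [p_eq_zero_of_vert_ne he]

lemma mul_le_sum_p_mul (hδ : ∀ e, ∀ x ∈ sys.Ki (sys.edgeI e), δ ≤ sys.p e x) {g : E → ℝ}
    (hg : 0 ≤ g) (he : sys.vert x = sys.edgeI e) : δ * g e ≤ ∑ e, sys.p e x * g e :=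
  calc δ * g e ≤ sys.p e x * g e :=
        mul_le_mul_of_nonneg_right (hδ e x (he ▸ sys.mem_Ki_vert x)) (hg e)
    _ ≤ _ := Finset.single_le_sum (f := fun e => sys.p e x * g e)
        (fun e _ => mul_nonneg (sys.p_nonneg e x) (hg e)) (Finset.mem_univ e)

lemma exists_edge_le_of_sum_p_mul_le {g : E → ℝ} {c : ℝ} (h : ∑ e, sys.p e x * g e ≤ c) :
    ∃ e, sys.vert x = sys.edgeI e ∧ g e ≤ c := by
  have hsum : ∀ g : E → ℝ, ∑ e with sys.p e x ≠ 0, sys.p e x * g e = ∑ e, sys.p e x * g e :=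
    fun g => Finset.sum_filter_of_ne fun e _ he => left_ne_zero_of_mul he
  obtain ⟨e₀, -, he₀⟩ := Finset.exists_ne_zero_of_sum_ne_zero
    ((sys.p_sum_one x).trans_ne one_ne_zero)
  obtain ⟨e, he, hge⟩ := Finset.exists_le_of_sum_le (s := {e | sys.p e x ≠ 0})
    (f := fun e => sys.p e x * g e) (g := fun e => sys.p e x * c) ⟨e₀, by simpa using he₀⟩
    (by rwa [hsum g, hsum fun _ => c, sum_p_mul_const])
  have hpe : sys.p e x ≠ 0 := by simpa using he
  exact ⟨e, not_imp_comm.1 p_eq_zero_of_vert_ne hpe,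
    le_of_mul_le_mul_left hge ((sys.p_nonneg e x).lt_of_ne' hpe)⟩

lemma ContractiveOnAvg.sum_le (hcontr : sys.ContractiveOnAvg a) (h : sys.vert x = sys.vert y) :
    ∑ e, sys.p e x * dist (sys.w e x) (sys.w e y) ≤ a * dist x y :=
  hcontr _ x (sys.mem_Ki_vert x) y (h ▸ sys.mem_Ki_vert y)

lemma ContractiveOnAvg.dist_w_le (hcontr : sys.ContractiveOnAvg a) (hδpos : 0 < δ)
    (hδ : ∀ e, ∀ x ∈ sys.Ki (sys.edgeI e), δ ≤ sys.p e x) (h : sys.vert x = sys.vert y)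
    (he : sys.vert x = sys.edgeI e) : dist (sys.w e x) (sys.w e y) ≤ a / δ * dist x y := by
  rw [div_mul_eq_mul_div, le_div_iff₀' hδpos]
  exact (mul_le_sum_p_mul hδ (g := fun e => dist (sys.w e x) (sys.w e y)) (fun _ => dist_nonneg)
    he).trans (hcontr.sum_le h)

lemma ContractiveOnAvg.exists_height_bound (hcontr : sys.ContractiveOnAvg a) (hδpos : 0 < δ)
    (hδ : ∀ e, ∀ x ∈ sys.Ki (sys.edgeI e), δ ≤ sys.p e x) :
    ∃ b : ℝ, 0 < b ∧ (∀ x, Uop sys sys.height x ≤ a * sys.height x + b) ∧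
      ∀ e x, sys.vert x = sys.edgeI e →
        sys.height (sys.w e x) ≤ a / δ * sys.height x + b := by
  obtain ⟨b, hb, hwb⟩ := sys.exists_height_w_le
  have hbase : ∀ x, sys.vert x = sys.vert (sys.base (sys.vert x)) := fun x => (vert_base _).symm
  refine ⟨b, hb, fun x => ?_, fun e x he => ?_⟩
  · calc Uop sys sys.height x
        ≤ ∑ e, sys.p e x * (dist (sys.w e x) (sys.w e (sys.base (sys.vert x))) + b) :=
          sum_p_mul_le_sum_p_mul fun e he => hwb e x he
      _ = ∑ e, sys.p e x * dist (sys.w e x) (sys.w e (sys.base (sys.vert x))) + b := by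
          simp only [mul_add, Finset.sum_add_distrib, sum_p_mul_const]
      _ ≤ a * sys.height x + b := by
          gcongr
          exact hcontr.sum_le (hbase x)
  · exact (hwb e x he).trans (by gcongr; exact hcontr.dist_w_le hδpos hδ (hbase x) he)

end Averages

section MarkovOperator

variable {sys : MarkovSystem K N E} {f : K → ℝ} {B : ℝ}

variable (sys) in
lemma Uop_const (c : ℝ) (x : K) : Uop sys (fun _ => c) x = c := sum_p_mul_const x c

variable (sys) in
lemma Uop_mono : Monotone (Uop sys) := fun _ _ hfg x =>
  sum_p_mul_le_sum_p_mul fun e _ => hfg (sys.w e x)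

lemma abs_Uop_le (hB : ∀ x, |f x| ≤ B) (x : K) : |Uop sys f x| ≤ B :=
  abs_le.2 ⟨(sys.Uop_const (-B) x).ge.trans (sys.Uop_mono (fun y => (abs_le.1 (hB y)).1) x),
    (sys.Uop_mono (fun y => (abs_le.1 (hB y)).2) x).trans (sys.Uop_const B x).le⟩

lemma abs_iterate_Uop_le (hB : ∀ x, |f x| ≤ B) (n : ℕ) (x : K) : |(Uop sys)^[n] f x| ≤ B := by
  induction n generalizing x with
  | zero => exact hB x
  | succ n ih => rw [Function.iterate_succ_apply']; exact abs_Uop_le ih x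

lemma measurable_Uop (hf : Measurable f) : Measurable (Uop sys f) :=
  Finset.measurable_sum _ fun e _ => (sys.p_measurable e).mul (hf.comp (sys.w_measurable e))

lemma measurable_iterate_Uop (hf : Measurable f) (n : ℕ) : Measurable ((Uop sys)^[n] f) := by
  induction n with
  | zero => exact hf
  | succ n ih => rw [Function.iterate_succ_apply']; exact measurable_Uop ih

end MarkovOperator

section PairChain

variable (sys : MarkovSystem K N E)

/-- The Markov operator of the chain on `K × K` whose coordinates move independently, each according
to `sys`. It dominates the evolution of `|Uⁿf(x) - Uⁿf(y)|`. -/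
noncomputable def pairOp : Module.End ℝ (K × K → ℝ) where
  toFun g z := Uop sys (fun x => Uop sys (fun y => g (x, y)) z.2) z.1
  map_add' f g := by
    ext z
    simp [Uop, mul_add, Finset.sum_add_distrib]
  map_smul' c g := by
    ext z
    simp [Uop, Finset.mul_sum, mul_left_comm]

lemma isMarkovOperator_pairOp : IsMarkovOperator sys.pairOp where
  monotone _ _ hfg z := sys.Uop_mono (fun x => sys.Uop_mono (fun y => hfg (x, y)) z.2) z.1
  map_one := by
    ext z
    change Uop sys (fun _ => Uop sys (fun _ => 1) z.2) z.1 = 1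
    rw [Uop_const, Uop_const]

lemma pairOp_add_apply (f g : K → ℝ) (z : K × K) :
    sys.pairOp (fun z => f z.1 + g z.2) z = Uop sys f z.1 + Uop sys g z.2 := by
  change ∑ e, sys.p e z.1 * ∑ e', sys.p e' z.2 * (f (sys.w e z.1) + g (sys.w e' z.2)) = _
  simp only [mul_add, Finset.sum_add_distrib, sum_p_mul_const]
  rfl

/-- The Lyapunov function of the pair chain. -/
noncomputable def pairHeight (z : K × K) : ℝ := sys.height z.1 + sys.height z.2

/-- The pairs of points of a common cell at distance less than `η`, the set to which the pair chain
returns. -/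
def nearDiagonal (η : ℝ) : Set (K × K) := {z | sys.vert z.1 = sys.vert z.2 ∧ dist z.1 z.2 < η}

lemma pairHeight_nonneg : 0 ≤ sys.pairHeight := fun z =>
  add_nonneg (height_nonneg z.1) (height_nonneg z.2)

variable {sys} {x y : K} {e e' : E} {a b δ η : ℝ}

lemma pairOp_pairHeight_le (hb : ∀ x, Uop sys sys.height x ≤ a * sys.height x + b) :
    sys.pairOp sys.pairHeight ≤ a • sys.pairHeight + (2 * b) • 1 := fun z => by
  calc sys.pairOp sys.pairHeight z = Uop sys sys.height z.1 + Uop sys sys.height z.2 :=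
        sys.pairOp_add_apply _ _ z
    _ ≤ (a * sys.height z.1 + b) + (a * sys.height z.2 + b) := add_le_add (hb z.1) (hb z.2)
    _ = (a • sys.pairHeight + (2 * b) • 1) z := by simp [pairHeight]; ring

lemma sq_mul_le_pairOp (hδpos : 0 < δ) (hδ : ∀ e, ∀ x ∈ sys.Ki (sys.edgeI e), δ ≤ sys.p e x)
    {g : K × K → ℝ} (hg : 0 ≤ g) (he : sys.vert x = sys.edgeI e)
    (he' : sys.vert y = sys.edgeI e') :
    δ ^ 2 * g (sys.w e x, sys.w e' y) ≤ sys.pairOp g (x, y) := by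
  have hinner : ∀ e, 0 ≤ ∑ e', sys.p e' y * g (sys.w e x, sys.w e' y) := fun e =>
    Finset.sum_nonneg fun e' _ => mul_nonneg (sys.p_nonneg e' y) (hg _)
  calc δ ^ 2 * g (sys.w e x, sys.w e' y) = δ * (δ * g (sys.w e x, sys.w e' y)) := by ring
    _ ≤ δ * ∑ e', sys.p e' y * g (sys.w e x, sys.w e' y) := by
        gcongr
        exact mul_le_sum_p_mul hδ (g := fun e' => g (sys.w e x, sys.w e' y)) (fun _ => hg _) he'
    _ ≤ sys.pairOp g (x, y) := mul_le_sum_p_mul hδ hinner he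

lemma pow_succ_le_pairOp_pow_succ (hδpos : 0 < δ)
    (hδ : ∀ e, ∀ x ∈ sys.Ki (sys.edgeI e), δ ≤ sys.p e x) {g : K × K → ℝ} (hg : 0 ≤ g) {n : ℕ}
    (he : sys.vert x = sys.edgeI e) (he' : sys.vert y = sys.edgeI e')
    (h : (δ ^ 2) ^ n ≤ (sys.pairOp ^ n) g (sys.w e x, sys.w e' y)) :
    (δ ^ 2) ^ (n + 1) ≤ (sys.pairOp ^ (n + 1)) g (x, y) := by
  rw [pow_succ' (δ ^ 2), pow_succ' sys.pairOp]
  exact (mul_le_mul_of_nonneg_left h (sq_nonneg δ)).trans (sq_mul_le_pairOp hδpos hδ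
    ((sys.isMarkovOperator_pairOp.pow n).apply_nonneg hg) he he')

lemma ContractiveOnAvg.pow_le_pairOp_pow (hcontr : sys.ContractiveOnAvg a) (ha0 : 0 < a)
    (hδpos : 0 < δ) (hδ : ∀ e, ∀ x ∈ sys.Ki (sys.edgeI e), δ ≤ sys.p e x) (n : ℕ)
    (hxy : sys.vert x = sys.vert y) (hd : a ^ n * dist x y < η) :
    (δ ^ 2) ^ n ≤ (sys.pairOp ^ n) ((sys.nearDiagonal η).indicator 1) (x, y) := by
  induction n generalizing x y with
  | zero =>
    have : (x, y) ∈ sys.nearDiagonal η := ⟨hxy, by simpa using hd⟩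
    simp [this]
  | succ n ih =>
    obtain ⟨e, he, hle⟩ := exists_edge_le_of_sum_p_mul_le (hcontr.sum_le hxy)
    have he' : sys.vert y = sys.edgeI e := hxy ▸ he
    refine pow_succ_le_pairOp_pow_succ hδpos hδ (Set.indicator_nonneg fun _ _ => zero_le_one)
      he he' (ih ((vert_w he).trans (vert_w he').symm) ?_)
    calc a ^ n * dist (sys.w e x) (sys.w e y) ≤ a ^ n * (a * dist x y) := by gcongr
      _ = a ^ (n + 1) * dist x y := by ring
      _ < η := hd

-- The pair chain follows the two walks into a common cell and then contracts along shared edges.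
lemma ContractiveOnAvg.eventually_pow_le_pairOp_pow (hcontr : sys.ContractiveOnAvg a)
    (ha0 : 0 < a) (ha1 : a < 1) (hδpos : 0 < δ)
    (hδ : ∀ e, ∀ x ∈ sys.Ki (sys.edgeI e), δ ≤ sys.p e x) (hη : 0 < η) {n : ℕ} {u v t : Fin N}
    (hu : sys.Walk n u t) (hv : sys.Walk n v t) (R : ℝ) :
    ∀ᶠ T in atTop, ∀ z : K × K, sys.vert z.1 = u → sys.vert z.2 = v → sys.pairHeight z ≤ R →
      (δ ^ 2) ^ T ≤ (sys.pairOp ^ T) ((sys.nearDiagonal η).indicator 1) z := by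
  obtain ⟨b, -, -, hwb⟩ := hcontr.exists_height_bound hδpos hδ
  induction n generalizing u v R with
  | zero =>
    obtain rfl : u = t := hu
    obtain rfl : v = u := hv
    have hlim : Tendsto (fun T : ℕ => a ^ T * R) atTop (nhds 0) := by
      simpa using (_root_.tendsto_pow_atTop_nhds_zero_of_lt_one ha0.le ha1).mul_const R
    filter_upwards [hlim.eventually_lt_const hη] with T hT z hx hy hz
    have hxy : sys.vert z.1 = sys.vert z.2 := hx.trans hy.symm
    refine hcontr.pow_le_pairOp_pow ha0 hδpos hδ T hxy (lt_of_le_of_lt ?_ hT)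
    gcongr
    exact (dist_le_height_add_height hxy).trans hz
  | succ n ih =>
    obtain ⟨e, rfl, he⟩ := hu
    obtain ⟨e', rfl, he'⟩ := hv
    rw [← map_add_atTop_eq_nat 1, eventually_map]
    filter_upwards [ih he he' (a / δ * R + 2 * b)] with T hT z hx hy hz
    refine pow_succ_le_pairOp_pow_succ hδpos hδ (Set.indicator_nonneg fun _ _ => zero_le_one)
      hx hy (hT _ (vert_w hx) (vert_w hy) ?_)
    calc sys.height (sys.w e z.1) + sys.height (sys.w e' z.2)
        ≤ (a / δ * sys.height z.1 + b) + (a / δ * sys.height z.2 + b) :=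
          add_le_add (hwb e z.1 hx) (hwb e' z.2 hy)
      _ = a / δ * sys.pairHeight z + 2 * b := by rw [pairHeight]; ring
      _ ≤ a / δ * R + 2 * b := by gcongr

lemma ContractiveOnAvg.exists_le_pairOp_pow (hcontr : sys.ContractiveOnAvg a) (ha0 : 0 < a)
    (ha1 : a < 1) (hirred : sys.Irreducible) (haper : sys.Aperiodic) (hδpos : 0 < δ)
    (hδ : ∀ e, ∀ x ∈ sys.Ki (sys.edgeI e), δ ≤ sys.p e x) (hη : 0 < η) (R : ℝ) :
    ∃ T : ℕ, T ≠ 0 ∧ ∃ c : ℝ, 0 < c ∧ ∀ z, sys.pairHeight z ≤ R →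
      c ≤ (sys.pairOp ^ T) ((sys.nearDiagonal η).indicator 1) z := by
  have hev : ∀ uv : Fin N × Fin N, ∀ᶠ T in atTop, ∀ z : K × K, sys.vert z.1 = uv.1 →
      sys.vert z.2 = uv.2 → sys.pairHeight z ≤ R →
      (δ ^ 2) ^ T ≤ (sys.pairOp ^ T) ((sys.nearDiagonal η).indicator 1) z := fun uv => by
    obtain ⟨n, t, hu, hv⟩ := hirred.exists_common_walk haper uv.1 uv.2
    exact hcontr.eventually_pow_le_pairOp_pow ha0 ha1 hδpos hδ hη hu hv R
  obtain ⟨T, hT, hT0⟩ := ((eventually_all.2 hev).and (eventually_ne_atTop 0)).exists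
  exact ⟨T, hT0, (δ ^ 2) ^ T, by positivity, fun z => hT (sys.vert z.1, sys.vert z.2) z rfl rfl⟩

end PairChain

section Equicontinuity

variable {sys : MarkovSystem K N E} {f : K → ℝ} {a B L r ε : ℝ}

lemma abs_Uop_sub_Uop_le (hB : ∀ x, |f x| ≤ B) (x y : K) :
    |Uop sys f x - Uop sys f y| ≤
      ∑ e, sys.p e x * |f (sys.w e x) - f (sys.w e y)| + B * ∑ e, |sys.p e x - sys.p e y| := by
  have hsplit : Uop sys f x - Uop sys f y = ∑ e, (sys.p e x * (f (sys.w e x) - f (sys.w e y))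
      + (sys.p e x - sys.p e y) * f (sys.w e y)) := by
    rw [Uop, Uop, ← Finset.sum_sub_distrib]
    exact Finset.sum_congr rfl fun e _ => by ring
  rw [hsplit, Finset.mul_sum, ← Finset.sum_add_distrib]
  refine (Finset.abs_sum_le_sum_abs _ _).trans (Finset.sum_le_sum fun e _ => ?_)
  refine (abs_add_le _ _).trans (add_le_add (le_of_eq ?_) ?_)
  · rw [abs_mul, abs_of_nonneg (sys.p_nonneg _ _)]
  · rw [abs_mul, mul_comm]
    exact mul_le_mul_of_nonneg_right (hB _) (abs_nonneg _)

lemma abs_iterate_Uop_sub_le (hcontr : sys.ContractiveOnAvg a) (ha0 : 0 ≤ a)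
    (hB : ∀ x, |f x| ≤ B) (hL0 : 0 ≤ L)
    (hL : ∀ x y, sys.vert x = sys.vert y → |f x - f y| ≤ L * dist x y)
    {q l : ℕ → ℝ} (hl : 0 ≤ l) (hp : ∀ k x y, sys.vert x = sys.vert y →
      ∑ e, |sys.p e x - sys.p e y| ≤ q k + l k * dist x y)
    (n : ℕ) {x y : K} (hxy : sys.vert x = sys.vert y) :
    |(Uop sys)^[n] f x - (Uop sys)^[n] f y| ≤ B * ∑ k ∈ Finset.range n, q k +
      (L * a ^ n + B * ∑ k ∈ Finset.range n, a ^ k * l k) * dist x y := by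
  have hB0 : 0 ≤ B := (abs_nonneg _).trans (hB x)
  induction n generalizing q l x y with
  | zero => simpa using hL x y hxy
  | succ n ih =>
    set Q := B * ∑ k ∈ Finset.range n, q (k + 1)
    set C := L * a ^ n + B * ∑ k ∈ Finset.range n, a ^ k * l (k + 1)
    have hC : 0 ≤ C := add_nonneg (by positivity) (mul_nonneg hB0
      (Finset.sum_nonneg fun k _ => mul_nonneg (by positivity) (hl (k + 1))))
    have hmove : ∑ e, sys.p e x * |(Uop sys)^[n] f (sys.w e x) - (Uop sys)^[n] f (sys.w e y)| ≤
        Q + C * (a * dist x y) := by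
      calc _ ≤ ∑ e, sys.p e x * (Q + C * dist (sys.w e x) (sys.w e y)) :=
            sum_p_mul_le_sum_p_mul fun e he => ih (fun k => hl (k + 1)) (fun k => hp (k + 1))
              (by rw [vert_w he, vert_w (hxy ▸ he)])
        _ = Q + C * ∑ e, sys.p e x * dist (sys.w e x) (sys.w e y) := by
            simp only [mul_add, Finset.sum_add_distrib, sum_p_mul_const, Finset.mul_sum,
              mul_left_comm C]
        _ ≤ _ := by
            gcongr
            exact hcontr.sum_le hxy
    rw [Function.iterate_succ_apply', Finset.sum_range_succ' q, Finset.sum_range_succ', pow_zero,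
      one_mul]
    calc |Uop sys ((Uop sys)^[n] f) x - Uop sys ((Uop sys)^[n] f) y|
        ≤ _ := abs_Uop_sub_Uop_le (abs_iterate_Uop_le hB n) x y
      _ ≤ (Q + C * (a * dist x y)) + B * (q 0 + l 0 * dist x y) := by
          gcongr
          exact hp 0 x y hxy
      _ = _ := by
          simp only [Q, C, pow_succ, mul_right_comm _ a, ← Finset.sum_mul]
          ring

variable (sys) in
/-- The sum of the moduli of continuity of the functions `p_e`, each restricted to its cell. -/
noncomputable def pModulus (t : ℝ) : ℝ≥0∞ :=
  ∑ e, modulus (fun x : sys.Ki (sys.edgeI e) => sys.p e (x : K)) t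

lemma sum_abs_p_sub_le_pModulus {t : ℝ} (ht : sys.pModulus t ≠ ⊤) {x y : K}
    (hxy : sys.vert x = sys.vert y) (hd : dist x y ≤ t) :
    ∑ e, |sys.p e x - sys.p e y| ≤ (sys.pModulus t).toReal := by
  have hfin := ENNReal.sum_ne_top.1 ht
  rw [pModulus, ENNReal.toReal_sum hfin]
  refine Finset.sum_le_sum fun e he => ?_
  by_cases hx : sys.vert x = sys.edgeI e
  · exact abs_sub_le_toReal_modulus (x := ⟨x, hx ▸ sys.mem_Ki_vert x⟩)
      (y := ⟨y, hx ▸ hxy ▸ sys.mem_Ki_vert y⟩) (hfin e he) hd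
  · simp [p_eq_zero_of_vert_ne hx, p_eq_zero_of_vert_ne (hxy ▸ hx)]

lemma sum_abs_p_sub_le_two (x y : K) : ∑ e, |sys.p e x - sys.p e y| ≤ 2 := by
  calc ∑ e, |sys.p e x - sys.p e y| ≤ ∑ e, (sys.p e x + sys.p e y) :=
        Finset.sum_le_sum fun e _ => (abs_sub _ _).trans (by
          rw [abs_of_nonneg (sys.p_nonneg _ _), abs_of_nonneg (sys.p_nonneg _ _)])
    _ = 2 := by rw [Finset.sum_add_distrib, sys.p_sum_one, sys.p_sum_one]; norm_num

lemma sum_abs_p_sub_le_pModulus_add {t : ℝ} (ht0 : 0 < t) (ht : sys.pModulus t ≠ ⊤) {x y : K}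
    (hxy : sys.vert x = sys.vert y) :
    ∑ e, |sys.p e x - sys.p e y| ≤ (sys.pModulus t).toReal + 2 / t * dist x y := by
  rcases le_or_gt (dist x y) t with hd | hd
  · exact (sum_abs_p_sub_le_pModulus ht hxy hd).trans (le_add_of_nonneg_right (by positivity))
  · have hfar : 2 ≤ 2 / t * dist x y := by
      rw [div_mul_eq_mul_div, le_div_iff₀ ht0]
      linarith
    exact (sum_abs_p_sub_le_two x y).trans
      (hfar.trans (le_add_of_nonneg_left ENNReal.toReal_nonneg))

lemma exists_sum_toReal_pModulus_le
    (hdini : ∀ e, DiniContinuous fun x : sys.Ki (sys.edgeI e) => sys.p e (x : K))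
    (hr0 : 0 < r) (hr1 : r < 1) (hε : 0 < ε) :
    ∃ s : ℝ, 0 < s ∧ (∀ k : ℕ, sys.pModulus (s * r ^ k) ≠ ⊤) ∧
      ∀ n, ∑ k ∈ Finset.range n, (sys.pModulus (s * r ^ k)).toReal ≤ ε := by
  have hlim := tendsto_finsetSum Finset.univ fun e _ => (hdini e).tendsto_tsum_modulus hr0 hr1
  rw [Finset.sum_const_zero] at hlim
  obtain ⟨s, hs, hs0⟩ := ((hlim.eventually_le_const (ENNReal.ofReal_pos.2 hε)).and
    self_mem_nhdsWithin).exists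
  have hsum : ∑' k : ℕ, sys.pModulus (s * r ^ k) ≤ ENNReal.ofReal ε := by
    simpa only [pModulus, Summable.tsum_finsetSum fun _ _ => ENNReal.summable] using hs
  have hfin : ∀ k : ℕ, sys.pModulus (s * r ^ k) ≠ ⊤ := fun k =>
    ne_top_of_le_ne_top ENNReal.ofReal_ne_top ((ENNReal.le_tsum k).trans hsum)
  refine ⟨s, hs0, hfin, fun n => ?_⟩
  rw [← ENNReal.toReal_sum fun k _ => hfin k]
  exact ENNReal.toReal_le_of_le_ofReal hε.le ((ENNReal.sum_le_tsum _).trans hsum)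

lemma sum_sq_pow_mul_div_le (hr0 : 0 < r) (hr1 : r < 1) {s : ℝ} (hs : 0 < s) (n : ℕ) :
    ∑ k ∈ Finset.range n, (r ^ 2) ^ k * (2 / (s * r ^ k)) ≤ 2 / s * (1 - r)⁻¹ := by
  have hterm : ∀ k, (r ^ 2) ^ k * (2 / (s * r ^ k)) = 2 / s * r ^ k := fun k => by
    field_simp
    ring
  simp only [hterm, ← Finset.mul_sum]
  gcongr
  rw [← tsum_geometric_of_lt_one hr0.le hr1]
  exact (summable_geometric_of_lt_one hr0.le hr1).sum_le_tsum _ fun k _ => pow_nonneg hr0.le k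

-- Comparing the `p_e` at scale `s * r ^ k` in step `k` costs a summable amount by Dini continuity.
-- Points further apart contribute at most `2 / (s * r ^ k)` times their distance, which average
-- contraction turns into a geometric series of ratio `a / r = r`.
theorem exists_nearDiagonal_abs_iterate_Uop_sub_le (hcontr : sys.ContractiveOnAvg a)
    (ha0 : 0 < a) (ha1 : a < 1)
    (hdini : ∀ e, DiniContinuous fun x : sys.Ki (sys.edgeI e) => sys.p e (x : K))
    (hB0 : 0 ≤ B) (hB : ∀ x, |f x| ≤ B) (hL0 : 0 ≤ L)
    (hL : ∀ x y, sys.vert x = sys.vert y → |f x - f y| ≤ L * dist x y) (hε : 0 < ε) :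
    ∃ η : ℝ, 0 < η ∧ ∀ n, ∀ z ∈ sys.nearDiagonal η,
      |(Uop sys)^[n] f z.1 - (Uop sys)^[n] f z.2| ≤ ε := by
  obtain ⟨r, hr0, rfl⟩ : ∃ r : ℝ, 0 < r ∧ r ^ 2 = a :=
    ⟨√a, Real.sqrt_pos.2 ha0, Real.sq_sqrt ha0.le⟩
  have hr1 : r < 1 := (sq_lt_one_iff₀ hr0.le).1 ha1
  have hmul_le : ∀ c : ℝ, 0 ≤ c → c * (ε / (2 * (c + 1))) ≤ ε / 2 := fun c hc => by
    rw [← mul_div_assoc, div_le_div_iff₀ (by positivity) two_pos]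
    nlinarith
  obtain ⟨s, hs, hfin, hnear⟩ := exists_sum_toReal_pModulus_le hdini hr0 hr1
    (ε := ε / (2 * (B + 1))) (by positivity)
  set C := L + B * (2 / s * (1 - r)⁻¹)
  have hC0 : 0 ≤ C := add_nonneg hL0 (mul_nonneg hB0 (mul_nonneg (by positivity)
    (inv_nonneg.2 (sub_nonneg.2 hr1.le))))
  refine ⟨ε / (2 * (C + 1)), by positivity, fun n z hz => ?_⟩
  calc |(Uop sys)^[n] f z.1 - (Uop sys)^[n] f z.2|
      ≤ _ := abs_iterate_Uop_sub_le hcontr ha0.le hB hL0 hL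
        (q := fun k => (sys.pModulus (s * r ^ k)).toReal) (l := fun k => 2 / (s * r ^ k))
        (fun k => by positivity)
        (fun k x y => sum_abs_p_sub_le_pModulus_add (by positivity) (hfin k)) n hz.1
    _ ≤ B * (ε / (2 * (B + 1))) + C * (ε / (2 * (C + 1))) := by
        gcongr
        · exact hnear n
        · exact add_le_add (mul_le_of_le_one_right hL0 (pow_le_one₀ ha0.le ha1.le))
            (mul_le_mul_of_nonneg_left (sum_sq_pow_mul_div_le hr0 hr1 hs n) hB0)
        · exact hz.2.le
    _ ≤ ε / 2 + ε / 2 := add_le_add (hmul_le B hB0) (hmul_le C hC0)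
    _ = ε := add_halves ε

end Equicontinuity

section Coupling

variable {sys : MarkovSystem K N E} {f : K → ℝ} {a δ B L : ℝ}

lemma abs_Uop_sub_Uop_le_pairOp (f : K → ℝ) (z : K × K) :
    |Uop sys f z.1 - Uop sys f z.2| ≤ sys.pairOp (fun z => |f z.1 - f z.2|) z := by
  have hpair : Uop sys f z.1 - Uop sys f z.2 = sys.pairOp (fun z => f z.1 - f z.2) z := by
    change _ = ∑ e, sys.p e z.1 * ∑ e', sys.p e' z.2 * (f (sys.w e z.1) - f (sys.w e' z.2))
    simp only [mul_sub, Finset.sum_sub_distrib, sum_p_mul_const]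
    rfl
  rw [hpair]
  exact sys.isMarkovOperator_pairOp.abs_apply_le _ z

lemma exists_abs_iterate_Uop_sub_le (hcontr : sys.ContractiveOnAvg a) (ha0 : 0 < a) (ha1 : a < 1)
    (hirred : sys.Irreducible) (haper : sys.Aperiodic) (hδpos : 0 < δ)
    (hδ : ∀ e, ∀ x ∈ sys.Ki (sys.edgeI e), δ ≤ sys.p e x)
    (hdini : ∀ e, DiniContinuous fun x : sys.Ki (sys.edgeI e) => sys.p e (x : K))
    (hB0 : 0 ≤ B) (hB : ∀ x, |f x| ≤ B) (hL0 : 0 ≤ L)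
    (hL : ∀ x y, sys.vert x = sys.vert y → |f x - f y| ≤ L * dist x y) {ε : ℝ} (hε : 0 < ε) :
    ∃ u : ℕ → ℝ, Tendsto u atTop (nhds 0) ∧ ∃ β : ℝ, 0 ≤ β ∧ ∀ n (z : K × K),
      |(Uop sys)^[n] f z.1 - (Uop sys)^[n] f z.2| ≤ ε + u n * (1 + β * sys.pairHeight z) := by
  obtain ⟨η, hη, hnear⟩ :=
    exists_nearDiagonal_abs_iterate_Uop_sub_le hcontr ha0 ha1 hdini hB0 hB hL0 hL hε
  obtain ⟨b, hb, hdrift, -⟩ := hcontr.exists_height_bound hδpos hδ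
  set g : ℕ → K × K → ℝ := fun n =>
    (fun z => |(Uop sys)^[n] f z.1 - (Uop sys)^[n] f z.2|) - ε • 1
  have hg : ∀ n, g (n + 1) ≤ sys.pairOp (g n) := fun n z => by
    rw [map_sub, map_smul, sys.isMarkovOperator_pairOp.map_one]
    simp only [g, Function.iterate_succ_apply']
    exact sub_le_sub_right (abs_Uop_sub_Uop_le_pairOp _ z) _
  have hgB : ∀ n z, g n z ≤ B + B := fun n z => by
    have hbound := abs_iterate_Uop_le (sys := sys) hB n
    calc g n z ≤ |(Uop sys)^[n] f z.1 - (Uop sys)^[n] f z.2| := by simpa [g] using hε.le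
      _ ≤ B + B := (abs_sub _ _).trans (add_le_add (hbound z.1) (hbound z.2))
  obtain ⟨u, hu, β, hβ, hle⟩ := sys.isMarkovOperator_pairOp.exists_tendsto_zero_bound
    sys.pairHeight_nonneg ha0.le ha1 (by positivity) (pairOp_pairHeight_le hdrift)
    (hcontr.exists_le_pairOp_pow ha0 ha1 hirred haper hδpos hδ hη) hg
    (fun n z hz => by simpa [g] using hnear n z hz) (by positivity) hgB
  exact ⟨u, hu, β, hβ, fun n z => by simpa [g, add_comm] using hle n z⟩

lemma tendsto_iterate_Uop_sub (hcontr : sys.ContractiveOnAvg a) (ha0 : 0 < a) (ha1 : a < 1)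
    (hirred : sys.Irreducible) (haper : sys.Aperiodic) (hδpos : 0 < δ)
    (hδ : ∀ e, ∀ x ∈ sys.Ki (sys.edgeI e), δ ≤ sys.p e x)
    (hdini : ∀ e, DiniContinuous fun x : sys.Ki (sys.edgeI e) => sys.p e (x : K))
    (hB : ∀ x, |f x| ≤ B) (hL0 : 0 ≤ L)
    (hL : ∀ x y, sys.vert x = sys.vert y → |f x - f y| ≤ L * dist x y)
    {s : Set K} (hs : Bornology.IsBounded s) (y : K) :
    Tendsto (fun q : ℕ × K => (Uop sys)^[q.1] f q.2 - (Uop sys)^[q.1] f y)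
      (atTop ×ˢ principal s) (nhds 0) := by
  obtain ⟨R, hR⟩ := sys.exists_height_le_of_isBounded hs
  refine Metric.tendsto_nhds.2 fun ε hε => ?_
  obtain ⟨u, hu, β, hβ, hle⟩ := exists_abs_iterate_Uop_sub_le hcontr ha0 ha1 hirred haper hδpos hδ
    hdini ((abs_nonneg _).trans (hB y)) hB hL0 hL (half_pos hε)
  have hlim : Tendsto (fun n => |u n| * (1 + β * (R + sys.height y))) atTop (nhds 0) := by
    simpa using hu.abs.mul_const (1 + β * (R + sys.height y))
  rw [eventually_prod_principal_iff]
  filter_upwards [hlim.eventually_lt_const (half_pos hε)] with n hn x hx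
  rw [Real.dist_0_eq_abs]
  calc |(Uop sys)^[n] f x - (Uop sys)^[n] f y|
      ≤ ε / 2 + u n * (1 + β * sys.pairHeight (x, y)) := hle n (x, y)
    _ ≤ ε / 2 + |u n| * (1 + β * (R + sys.height y)) := by
        have hH : sys.pairHeight (x, y) ≤ R + sys.height y := add_le_add_left (hR x hx) _
        have hH0 : 0 ≤ sys.pairHeight (x, y) := sys.pairHeight_nonneg _
        gcongr
        exact le_abs_self _
    _ < ε / 2 + ε / 2 := by gcongr
    _ = ε := add_halves ε

end Coupling

section Duality

variable {sys : MarkovSystem K N E} {f : K → ℝ} {B : ℝ}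

lemma IsInvariant.integral_iterate_Uop {μ : Measure K} (hμ : sys.IsInvariant μ)
    (hf : Measurable f) (hB : ∀ x, |f x| ≤ B) (n : ℕ) :
    ∫ x, (Uop sys)^[n] f x ∂μ = ∫ x, f x ∂μ := by
  induction n with
  | zero => rfl
  | succ n ih =>
    rw [← ih, Function.iterate_succ_apply']
    exact hμ.2 _ (measurable_iterate_Uop hf n) ⟨B, abs_iterate_Uop_le hB n⟩

lemma Ustar_univ (ν : Measure K) : Ustar sys ν Set.univ = ν Set.univ := by
  have hsum : ∀ x, ∑ e, ENNReal.ofReal (sys.p e x) = 1 := fun x => by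
    rw [← ENNReal.ofReal_sum_of_nonneg fun e _ => sys.p_nonneg e x, sys.p_sum_one,
      ENNReal.ofReal_one]
  simp only [Ustar, Measure.finsetSum_apply, Measure.map_apply (sys.w_measurable _) .univ,
    Set.preimage_univ, withDensity_apply _ MeasurableSet.univ, Measure.restrict_univ]
  rw [← lintegral_finsetSum _ fun e _ => (sys.p_measurable e).ennreal_ofReal]
  simp [hsum]

lemma isProbabilityMeasure_Ustar (ν : Measure K) [IsProbabilityMeasure ν] :
    IsProbabilityMeasure (Ustar sys ν) :=
  ⟨(Ustar_univ ν).trans measure_univ⟩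

lemma isProbabilityMeasure_iterate_Ustar (ν : Measure K) [IsProbabilityMeasure ν] (n : ℕ) :
    IsProbabilityMeasure ((Ustar sys)^[n] ν) := by
  induction n with
  | zero => assumption
  | succ n ih => rw [Function.iterate_succ_apply']; exact isProbabilityMeasure_Ustar _

variable (sys) in
lemma integrable_p (ν : Measure K) [IsFiniteMeasure ν] (e : E) : Integrable (sys.p e) ν := by
  refine .of_bound (sys.p_measurable e).aestronglyMeasurable 1 (.of_forall fun x => ?_)
  rw [Real.norm_of_nonneg (sys.p_nonneg e x), ← sys.p_sum_one x]
  exact Finset.single_le_sum (fun e _ => sys.p_nonneg e x) (Finset.mem_univ e)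

lemma integral_Ustar (ν : Measure K) [IsFiniteMeasure ν] (hf : Measurable f)
    (hB : ∀ x, |f x| ≤ B) : ∫ x, f x ∂(Ustar sys ν) = ∫ x, Uop sys f x ∂ν := by
  have hfin : ∀ e, IsFiniteMeasure (ν.withDensity fun x => ENNReal.ofReal (sys.p e x)) :=
    fun e => isFiniteMeasure_withDensity_ofReal (sys.integrable_p ν e).2
  have hint : ∀ e, Integrable (fun x => sys.p e x * f (sys.w e x)) ν := fun e =>
    (sys.integrable_p ν e).mul_bdd (c := B) (hf.comp (sys.w_measurable e)).aestronglyMeasurable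
      (.of_forall fun x => hB (sys.w e x))
  rw [Ustar, integral_finsetSum_measure fun e _ =>
    .of_bound hf.aestronglyMeasurable B (.of_forall hB)]
  simp only [Uop]
  rw [integral_finsetSum _ fun e _ => hint e]
  refine Finset.sum_congr rfl fun e _ => ?_
  rw [integral_map (sys.w_measurable e).aemeasurable hf.aestronglyMeasurable,
    integral_withDensity_eq_integral_toReal_smul (sys.p_measurable e).ennreal_ofReal
      (.of_forall fun x => ENNReal.ofReal_lt_top)]
  simp only [ENNReal.toReal_ofReal (sys.p_nonneg _ _), smul_eq_mul]

lemma integral_iterate_Ustar (ν : Measure K) [IsProbabilityMeasure ν] (hf : Measurable f)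
    (hB : ∀ x, |f x| ≤ B) (n : ℕ) :
    ∫ x, f x ∂((Ustar sys)^[n] ν) = ∫ x, (Uop sys)^[n] f x ∂ν := by
  induction n generalizing ν with
  | zero => rfl
  | succ n ih =>
    have := isProbabilityMeasure_Ustar (sys := sys) ν
    rw [Function.iterate_succ_apply, Function.iterate_succ_apply', ih,
      integral_Ustar ν (measurable_iterate_Uop hf n) (abs_iterate_Uop_le hB n)]

lemma integral_iterate_Ustar_dirac (hf : Measurable f) (hB : ∀ x, |f x| ≤ B) (n : ℕ) (x : K) :
    ∫ y, f y ∂((Ustar sys)^[n] (Measure.dirac x)) = (Uop sys)^[n] f x := by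
  rw [integral_iterate_Ustar _ hf hB, integral_dirac' _ _
    (measurable_iterate_Uop hf n).stronglyMeasurable]

lemma IsInvariant.tendsto_iterate_Uop_of_tendsto_sub {μ : Measure K}
    (hμ : sys.IsInvariant μ) (hf : Measurable f) (hB : ∀ x, |f x| ≤ B) {l : Filter (ℕ × K)}
    [l.IsCountablyGenerated] (h : ∀ y, Tendsto
      (fun q : ℕ × K => (Uop sys)^[q.1] f q.2 - (Uop sys)^[q.1] f y) l (nhds 0)) :
    Tendsto (fun q : ℕ × K => (Uop sys)^[q.1] f q.2) l (nhds (∫ y, f y ∂μ)) := by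
  have := hμ.1
  have hint : ∀ n, Integrable ((Uop sys)^[n] f) μ := fun n =>
    .of_bound (measurable_iterate_Uop hf n).aestronglyMeasurable B
      (.of_forall (abs_iterate_Uop_le hB n))
  have hlim : Tendsto (fun q : ℕ × K => ∫ y, ((Uop sys)^[q.1] f q.2 - (Uop sys)^[q.1] f y) ∂μ) l
      (nhds (∫ _, 0 ∂μ)) := by
    refine tendsto_integral_filter_of_dominated_convergence (fun _ => B + B)
      (.of_forall fun q => ((integrable_const _).sub (hint q.1)).aestronglyMeasurable)
      (.of_forall fun q => .of_forall fun y => ?_) (integrable_const _) (.of_forall h)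
    exact (norm_sub_le _ _).trans
      (add_le_add (abs_iterate_Uop_le hB _ _) (abs_iterate_Uop_le hB _ _))
  simp only [integral_sub (integrable_const _) (hint _), hμ.integral_iterate_Uop hf hB,
    integral_const, probReal_univ, one_smul, smul_zero] at hlim
  exact tendsto_sub_nhds_zero_iff.1 hlim

lemma tendsto_integral_iterate_Ustar (hf : Measurable f) (hB : ∀ x, |f x| ≤ B)
    {c : ℝ} (h : ∀ x, Tendsto (fun n : ℕ => (Uop sys)^[n] f x) atTop (nhds c))
    (ν : Measure K) [IsProbabilityMeasure ν] :
    Tendsto (fun n : ℕ => ∫ x, f x ∂((Ustar sys)^[n] ν)) atTop (nhds c) := by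
  simp only [integral_iterate_Ustar ν hf hB]
  suffices hlim : Tendsto (fun n : ℕ => ∫ x, (Uop sys)^[n] f x ∂ν) atTop (nhds (∫ _, c ∂ν)) by
    simpa using hlim
  exact tendsto_integral_of_dominated_convergence (fun _ => B)
    (fun n => (measurable_iterate_Uop hf n).aestronglyMeasurable) (integrable_const _)
    (fun n => .of_forall (abs_iterate_Uop_le hB n)) (.of_forall h)

end Duality

section Convergence

variable [BorelSpace K] {sys : MarkovSystem K N E} {a δ : ℝ} {μ : Measure K}

theorem IsInvariant.tendsto_iterate_Uop_of_lipschitz (hμ : sys.IsInvariant μ)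
    (hcontr : sys.ContractiveOnAvg a) (ha0 : 0 < a) (ha1 : a < 1)
    (hirred : sys.Irreducible) (haper : sys.Aperiodic) (hδpos : 0 < δ)
    (hδ : ∀ e, ∀ x ∈ sys.Ki (sys.edgeI e), δ ≤ sys.p e x)
    (hdini : ∀ e, DiniContinuous fun x : sys.Ki (sys.edgeI e) => sys.p e (x : K))
    {f : K → ℝ} {L : NNReal} (hL : LipschitzWith L f) {B : ℝ} (hB : ∀ x, |f x| ≤ B)
    {s : Set K} (hs : Bornology.IsBounded s) :
    Tendsto (fun q : ℕ × K => (Uop sys)^[q.1] f q.2) (atTop ×ˢ principal s)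
      (nhds (∫ y, f y ∂μ)) :=
  hμ.tendsto_iterate_Uop_of_tendsto_sub hL.continuous.measurable hB fun y =>
    tendsto_iterate_Uop_sub hcontr ha0 ha1 hirred haper hδpos hδ hdini
      hB L.2 (fun x y _ => hL.dist_le_mul x y) hs y

lemma IsInvariant.tendsto_iterate_Uop_of_forall_lipschitz (hμ : sys.IsInvariant μ)
    {l : Filter (ℕ × K)} [l.IsCountablyGenerated]
    (h : ∀ (f : K → ℝ) (L : NNReal) (B : ℝ), LipschitzWith L f → (∀ x, |f x| ≤ B) →
      Tendsto (fun q : ℕ × K => (Uop sys)^[q.1] f q.2) l (nhds (∫ y, f y ∂μ)))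
    {f : K → ℝ} (hf : Continuous f) {B : ℝ} (hB : ∀ x, |f x| ≤ B) :
    Tendsto (fun q : ℕ × K => (Uop sys)^[q.1] f q.2) l (nhds (∫ y, f y ∂μ)) := by
  have := hμ.1
  obtain ⟨x₀⟩ := μ.nonempty_of_neZero
  have hweak : Tendsto (β := ProbabilityMeasure K) (fun q : ℕ × K =>
      ⟨(Ustar sys)^[q.1] (Measure.dirac q.2), isProbabilityMeasure_iterate_Ustar _ q.1⟩) l
      (nhds ⟨μ, hμ.1⟩) := by
    refine tendsto_iff_forall_lipschitz_integral_tendsto.2 ?_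
    rintro g ⟨C, hC⟩ ⟨L, hL⟩
    have hg : ∀ x, |g x| ≤ |g x₀| + C := fun x => by
      have hdist := hC x x₀
      rw [Real.dist_eq] at hdist
      linarith [abs_sub_abs_le_abs_sub (g x) (g x₀)]
    simpa [integral_iterate_Ustar_dirac hL.continuous.measurable hg] using h g L _ hL hg
  simpa [integral_iterate_Ustar_dirac hf.measurable hB] using
    ProbabilityMeasure.tendsto_iff_forall_integral_tendsto.1 hweak
      (BoundedContinuousFunction.ofNormedAddCommGroup f hf B hB)

end Convergence

end MarkovSystem

theorem attractiveness_of_aperiodic_CMS_general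
    {K : Type*} [MetricSpace K] [MeasurableSpace K] [BorelSpace K]
    {N : ℕ} {E : Type*} [Fintype E]
    (sys : MarkovSystem K N E) (a : ℝ) (ha0 : 0 < a) (ha1 : a < 1)
    (hcontr : sys.ContractiveOnAvg a)
    (hirred : sys.Irreducible) (haper : sys.Aperiodic)
    (hdini : ∀ e, DiniContinuous fun x : sys.Ki (sys.edgeI e) => sys.p e (x : K))
    (δ : ℝ) (hδpos : 0 < δ)
    (hδ : ∀ e, ∀ x ∈ sys.Ki (sys.edgeI e), δ ≤ sys.p e x)
    (μ : Measure K) (hμ : sys.IsInvariant μ) :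
    (∀ f : K → ℝ, Continuous f → (∃ B, ∀ x, |f x| ≤ B) →
      (∀ x : K, Filter.Tendsto (fun n : ℕ => (Uop sys)^[n] f x)
        Filter.atTop (nhds (∫ y, f y ∂μ))) ∧
      ∀ s : Set K, Bornology.IsBounded s →
        TendstoUniformlyOn (fun n : ℕ => (Uop sys)^[n] f) (fun _ => ∫ y, f y ∂μ)
          Filter.atTop s) ∧
    ∀ ν : Measure K, IsProbabilityMeasure ν →
      ∀ f : K → ℝ, Continuous f → (∃ B, ∀ x, |f x| ≤ B) →
        Filter.Tendsto (fun n : ℕ => ∫ x, f x ∂((Ustar sys)^[n] ν))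
          Filter.atTop (nhds (∫ x, f x ∂μ)) := by
  have hunif : ∀ f : K → ℝ, Continuous f → (∃ B, ∀ x, |f x| ≤ B) →
      ∀ s : Set K, Bornology.IsBounded s →
        TendstoUniformlyOn (fun n : ℕ => (Uop sys)^[n] f) (fun _ => ∫ y, f y ∂μ) atTop s := by
    rintro f hf ⟨B, hB⟩ s hs
    refine tendsto_prod_principal_iff.1
      (hμ.tendsto_iterate_Uop_of_forall_lipschitz (fun g L C hL hC => ?_) hf hB)
    exact hμ.tendsto_iterate_Uop_of_lipschitz hcontr ha0 ha1 hirred haper hδpos hδ hdini hL hC hs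
  have hpoint : ∀ f : K → ℝ, Continuous f → (∃ B, ∀ x, |f x| ≤ B) → ∀ x : K,
      Tendsto (fun n : ℕ => (Uop sys)^[n] f x) atTop (nhds (∫ y, f y ∂μ)) := fun f hf hB x =>
    (hunif f hf hB {x} Bornology.isBounded_singleton).tendsto_at rfl
  refine ⟨fun f hf hB => ⟨hpoint f hf hB, hunif f hf hB⟩, ?_⟩
  rintro ν hν f hf ⟨B, hB⟩
  exact MarkovSystem.tendsto_integral_iterate_Ustar hf.measurable hB (hpoint f hf ⟨B, hB⟩) ν

/-- For an irreducible and aperiodic contractive Markov system (with the standing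
assumptions) and its unique invariant measure `μ`: `Uⁿf(x) → ∫ f dμ` for every
bounded continuous `f` and every `x`, uniformly on bounded subsets; in particular
`μ` is attractive. -/
theorem attractiveness_of_aperiodic_CMS
    {K : Type*} [MetricSpace K] [CompleteSpace K] [MeasurableSpace K] [BorelSpace K]
    {N : ℕ} {E : Type*} [Fintype E]
    (sys : MarkovSystem K N E) (a : ℝ) (ha0 : 0 < a) (ha1 : a < 1)
    (hcontr : sys.ContractiveOnAvg a)
    (hirred : sys.Irreducible) (haper : sys.Aperiodic)
    (hrelcpt : ∀ s : Set K, Bornology.IsBounded s → IsCompact (closure s))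
    (hopen : ∀ v, IsOpen (sys.Ki v))
    (hdini : ∀ e, DiniContinuous fun x : sys.Ki (sys.edgeI e) => sys.p e (x : K))
    (δ : ℝ) (hδpos : 0 < δ)
    (hδ : ∀ e, ∀ x ∈ sys.Ki (sys.edgeI e), δ ≤ sys.p e x)
    (μ : Measure K) (hμ : sys.IsInvariant μ)
    (huniq : ∀ ν : Measure K, sys.IsInvariant ν → ν = μ) :
    (∀ f : K → ℝ, Continuous f → (∃ B, ∀ x, |f x| ≤ B) →
      (∀ x : K, Filter.Tendsto (fun n : ℕ => (Uop sys)^[n] f x)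
        Filter.atTop (nhds (∫ y, f y ∂μ))) ∧
      ∀ s : Set K, Bornology.IsBounded s →
        TendstoUniformlyOn (fun n : ℕ => (Uop sys)^[n] f) (fun _ => ∫ y, f y ∂μ)
          Filter.atTop s) ∧
    ∀ ν : Measure K, IsProbabilityMeasure ν →
      ∀ f : K → ℝ, Continuous f → (∃ B, ∀ x, |f x| ≤ B) →
        Filter.Tendsto (fun n : ℕ => ∫ x, f x ∂((Ustar sys)^[n] ν))
          Filter.atTop (nhds (∫ x, f x ∂μ)) := by
  exact attractiveness_of_aperiodic_CMS_general sys a ha0 ha1 hcontr hirred haper hdini δ hδpos hδ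
    μ hμ
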